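/- Let k = (k_1,…,k_s) be a sequence of positive integers with n = k_1+…+k_s, and let λ = (λ_1,…,λ_n) be a weakly decreasing sequence of real numbers whose block structure is given by k (i.e., λ is constant on each block n_{i-1}+1,…,n_i and strictly decreases between consecutive blocks). Then there is an order isomorphism φ from the poset of faces of the Gelfand–Cetlin polytope P_λ (ordered by inclusion) to the poset of faces of the ladder diagram Γ_k (ordered by inclusion of subgraphs) such that dim φ(F) = dim F for every face F of P_λ. -/

import Mathlib

open Classical

noncomputable section

/-- Partial sums of the (0-indexed) sequence `k`: `nseq k i = k 0 + ⋯ + k (i-1)`;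
so `nseq k i` is the paper's `n_i` for the sequence `(k_1, …, k_s) = (k 0, …, k (s-1))`. -/
def nseq (k : ℕ → ℕ) (i : ℕ) : ℕ := ∑ j ∈ Finset.range i, k j

/-- The set of terminal vertices `T_k = {(n_i, n - n_i) : 0 ≤ i ≤ s}` of the ladder diagram. -/
def terminals (s : ℕ) (k : ℕ → ℕ) : Set (ℕ × ℕ) :=
  {v | ∃ i ≤ s, v = (nseq k i, nseq k s - nseq k i)}

/-- The vertex set of the ladder diagram `Γ_k`. -/
def ladderV (s : ℕ) (k : ℕ → ℕ) : Set (ℕ × ℕ) :=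
  {v | ∃ t ∈ terminals s k, v.1 ≤ t.1 ∧ v.2 ≤ t.2}

/-- A unit grid step: one step to the right or one step up. -/
def gridStep (v w : ℕ × ℕ) : Prop :=
  w = (v.1 + 1, v.2) ∨ w = (v.1, v.2 + 1)

/-- The edge set of the ladder diagram `Γ_k`. -/
def ladderE (s : ℕ) (k : ℕ → ℕ) : Set ((ℕ × ℕ) × (ℕ × ℕ)) :=
  {e | e.1 ∈ ladderV s k ∧ e.2 ∈ ladderV s k ∧ gridStep e.1 e.2}

/-- A combinatorial (directed) graph in the grid `ℤ_{≥0} × ℤ_{≥0}`,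
given by a set of vertices and a set of edges. -/
@[ext] structure LGraph where
  V : Set (ℕ × ℕ)
  E : Set ((ℕ × ℕ) × (ℕ × ℕ))

/-- Subgraph inclusion order on grid graphs. -/
instance : PartialOrder LGraph where
  le γ γ' := γ.V ⊆ γ'.V ∧ γ.E ⊆ γ'.E
  le_refl γ := ⟨subset_rfl, subset_rfl⟩
  le_trans a b c h h' := ⟨h.1.trans h'.1, h.2.trans h'.2⟩
  le_antisymm a b h h' := LGraph.ext (subset_antisymm h.1 h'.1) (subset_antisymm h.2 h'.2)

/-- The ladder diagram `Γ_k` as a grid graph. -/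
def ladder (s : ℕ) (k : ℕ → ℕ) : LGraph :=
  ⟨ladderV s k, ladderE s k⟩

/-- A positive path: (the graph of) a shortest path in the ladder diagram `Γ_k`
from the origin `(0,0)` to a terminal vertex. -/
def IsPositivePath (s : ℕ) (k : ℕ → ℕ) (p : LGraph) : Prop :=
  ∃ (m : ℕ) (f : ℕ → ℕ × ℕ),
    f 0 = (0, 0) ∧ f m ∈ terminals s k ∧
    (∀ i < m, gridStep (f i) (f (i + 1))) ∧
    (∀ i ≤ m, f i ∈ ladderV s k) ∧
    p.V = {v | ∃ i ≤ m, v = f i} ∧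
    p.E = {e | ∃ i < m, e = (f i, f (i + 1))}

/-- A face of the ladder diagram `Γ_k`: a subgraph which contains all terminal
vertices and is a union of positive paths. -/
def IsLadderFace (s : ℕ) (k : ℕ → ℕ) (γ : LGraph) : Prop :=
  terminals s k ⊆ γ.V ∧
  ∃ P : Set LGraph, (∀ p ∈ P, IsPositivePath s k p) ∧
    γ.V = ⋃ p ∈ P, LGraph.V p ∧ γ.E = ⋃ p ∈ P, LGraph.E p

/-- The dimension (first Betti number) of a face of a ladder diagram:
`|E(γ)| - |V(γ)| + 1`. -/
def ldim (γ : LGraph) : ℤ :=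
  (γ.E.ncard : ℤ) - (γ.V.ncard : ℤ) + 1

/-- The index set `I = {(i,j) : i,j ≥ 1, i+j ≤ n}` of the coordinates of a
Gelfand–Cetlin pattern. -/
def GCIdx (n : ℕ) : Set (ℕ × ℕ) := {p | 1 ≤ p.1 ∧ 1 ≤ p.2 ∧ p.1 + p.2 ≤ n}

/-- The entries of a Gelfand–Cetlin pattern `x`, extended by the boundary
condition `x_{i, n+1-i} = λ_i`. -/
def gcEntry (n : ℕ) (lam : ℕ → ℝ) (x : GCIdx n → ℝ) (p : ℕ × ℕ) : ℝ :=
  if h : p ∈ GCIdx n then x ⟨p, h⟩ else lam p.1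

/-- The Gelfand–Cetlin polytope `P_λ`: the set of points `(x_{i,j})_{(i,j) ∈ I}`
with `x_{i,j+1} ≥ x_{i,j} ≥ x_{i+1,j}` for all `(i,j) ∈ I`, where
`x_{i,n+1-i} = λ_i`. -/
def GCPoly (n : ℕ) (lam : ℕ → ℝ) : Set (GCIdx n → ℝ) :=
  {x | ∀ i j : ℕ, (i, j) ∈ GCIdx n →
    gcEntry n lam x (i, j) ≤ gcEntry n lam x (i, j + 1) ∧
    gcEntry n lam x (i + 1, j) ≤ gcEntry n lam x (i, j)}

/-- The subset of `P_λ` obtained by turning the inequalities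
`x_{i,j+1} ≥ x_{i,j}` for `(i,j) ∈ SH` and `x_{i,j} ≥ x_{i+1,j}` for
`(i,j) ∈ SV` into equalities. -/
def GCFaceOf (n : ℕ) (lam : ℕ → ℝ) (SH SV : Set (ℕ × ℕ)) : Set (GCIdx n → ℝ) :=
  {x | x ∈ GCPoly n lam ∧
    (∀ p ∈ SH, gcEntry n lam x (p.1, p.2 + 1) = gcEntry n lam x p) ∧
    (∀ p ∈ SV, gcEntry n lam x p = gcEntry n lam x (p.1 + 1, p.2))}

/-- A face of the GC polytope: a nonempty solution set of the system obtained
by replacing some of the defining inequalities by equalities. -/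
def IsGCFace (n : ℕ) (lam : ℕ → ℝ) (F : Set (GCIdx n → ℝ)) : Prop :=
  F.Nonempty ∧ ∃ SH SV : Set (ℕ × ℕ), SH ⊆ GCIdx n ∧ SV ⊆ GCIdx n ∧
    F = GCFaceOf n lam SH SV

/-- The dimension of (a face of) the GC polytope: the dimension of its affine span. -/
def GCdim (n : ℕ) (F : Set (GCIdx n → ℝ)) : ℕ :=
  Module.finrank ℝ (affineSpan ℝ F).direction

/-- `lam` (1-indexed) is weakly decreasing with block structure `k`: it is
constant on each block `(n_{i-1}, n_i]` and strictly decreases between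
consecutive blocks. -/
def HasBlockStructure (s : ℕ) (k : ℕ → ℕ) (lam : ℕ → ℝ) : Prop :=
  (∀ i < s, ∀ a b : ℕ, nseq k i < a → a ≤ b → b ≤ nseq k (i + 1) → lam a = lam b) ∧
  (∀ i : ℕ, 1 ≤ i → i < s → lam (nseq k i + 1) < lam (nseq k i))

/-- The edge set of the graph `φ(F)` associated to a subset `F` of the GC polytope. -/
def phiE (n : ℕ) (lam : ℕ → ℝ) (F : Set (GCIdx n → ℝ)) :
    Set ((ℕ × ℕ) × (ℕ × ℕ)) :=
  {e | (∃ i < n, e = ((0, i), (0, i + 1)) ∨ e = ((i, 0), (i + 1, 0))) ∨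
    (∃ i j : ℕ, (i, j) ∈ GCIdx n ∧ e = ((i - 1, j), (i, j)) ∧
      ∃ x ∈ F, gcEntry n lam x (i, j) < gcEntry n lam x (i, j + 1)) ∨
    (∃ i j : ℕ, (i, j) ∈ GCIdx n ∧ e = ((i, j - 1), (i, j)) ∧
      ∃ x ∈ F, gcEntry n lam x (i + 1, j) < gcEntry n lam x (i, j))}

/-- The graph `φ(F)`: its edges are given by `phiE` and its vertices are the
endpoints of its edges. -/
def phiGC (n : ℕ) (lam : ℕ → ℝ) (F : Set (GCIdx n → ℝ)) : LGraph where
  V := {v | ∃ e ∈ phiE n lam F, v = e.1 ∨ v = e.2}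
  E := phiE n lam F

/-- The map `ψ`: for a subgraph `γ`, the set of points of `P_λ` where the
inequalities corresponding to the missing edges of `γ` become equalities. -/
def psiGC (n : ℕ) (lam : ℕ → ℝ) (γ : LGraph) : Set (GCIdx n → ℝ) :=
  {x | x ∈ GCPoly n lam ∧ ∀ i j : ℕ, (i, j) ∈ GCIdx n →
    (((i - 1, j), (i, j)) ∉ γ.E → gcEntry n lam x (i, j) = gcEntry n lam x (i, j + 1)) ∧
    (((i, j - 1), (i, j)) ∉ γ.E → gcEntry n lam x (i, j) = gcEntry n lam x (i + 1, j))}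
/-- The recursively defined point `x̄` of the proof of Lemma 2.6 (bijectivity):
`x̄_{i,j} = λ_i` if `i + j = n + 1`, and for `i + j ≤ n` it is determined from
`x̄_{i,j+1}` and `x̄_{i+1,j}` according to which of the two edges
`((i-1,j),(i,j))`, `((i,j-1),(i,j))` belong to `E`. -/
def barX (n : ℕ) (lam : ℕ → ℝ) (E : Set ((ℕ × ℕ) × (ℕ × ℕ))) : ℕ → ℕ → ℝ
  | i, j =>
    if h1 : n + 1 ≤ i + j then lam i
    else if h2 : ((i - 1, j), (i, j)) ∈ E then
      if h3 : ((i, j - 1), (i, j)) ∈ E then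
        (barX n lam E i (j + 1) + barX n lam E (i + 1) j) / 2
      else barX n lam E (i + 1) j
    else barX n lam E i (j + 1)
  termination_by i j => n + 1 - (i + j)
  decreasing_by all_goals omega

/-- `α, β : ℕ → ℕ` encode an element
`w = ((α_1,β_1),…,(α_{s-1},β_{s-1})) ∈ W_{s-1}`, with the conventions
`α_0 = 0`, `β_0 = 1`, `α_s = 1`, `β_s = 0`. -/
def IsW (s : ℕ) (α β : ℕ → ℕ) : Prop :=
  (∀ i : ℕ, 1 ≤ i → i < s →
    (α i, β i) = (1, 0) ∨ (α i, β i) = (0, 1) ∨ (α i, β i) = (1, 1)) ∧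
  α 0 = 0 ∧ β 0 = 1 ∧ α s = 1 ∧ β s = 0

/-- The edge set of the subgraph `g_w` of `Γ_k`: the horizontal edge into the
terminal vertex `v_i` when `α_i = 1` and the vertical edge into `v_i` when
`β_i = 1`. -/
def gwE (s : ℕ) (k α β : ℕ → ℕ) : Set ((ℕ × ℕ) × (ℕ × ℕ)) :=
  {e | ∃ i ≤ s,
    (α i = 1 ∧
      e = ((nseq k i - 1, nseq k s - nseq k i), (nseq k i, nseq k s - nseq k i))) ∨
    (β i = 1 ∧
      e = ((nseq k i, nseq k s - nseq k i - 1), (nseq k i, nseq k s - nseq k i)))}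

/-- The subgraph `g_w` of `Γ_k`. -/
def gwGraph (s : ℕ) (k α β : ℕ → ℕ) : LGraph where
  V := {v | ∃ e ∈ gwE s k α β, v = e.1 ∨ v = e.2}
  E := gwE s k α β

/-- The interleaved sequence `r_w(k) * w̃` of length `2s - 1` (0-indexed):
entry `2j` is `k''_{j+1} = k_{j+1} + 1 - α_{j+1} - β_j` and entry `2j + 1` is
`w̃_{j+1} = α_{j+1} β_{j+1}`. -/
def rstar (s : ℕ) (k α β : ℕ → ℕ) (t : ℕ) : ℕ :=
  if t % 2 = 0 then k (t / 2) + 1 - α (t / 2 + 1) - β (t / 2)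
  else α (t / 2 + 1) * β (t / 2 + 1)

/-- `α`-value of one of the three symbols `(1,0), (0,1), (1,1)`,
encoded as `0, 1, 2 : Fin 3` respectively. -/
def aW3 (c : Fin 3) : ℕ := if c = 1 then 0 else 1

/-- `β`-value of one of the three symbols `(1,0), (0,1), (1,1)`,
encoded as `0, 1, 2 : Fin 3` respectively. -/
def bW3 (c : Fin 3) : ℕ := if c = 0 then 0 else 1

/-- The function `α` of the element of `W_{s-1}` encoded by
`c : Fin (s-1) → Fin 3` (with the conventions `α_0 = 0`, `α_s = 1`). -/
def alph (s : ℕ) (c : Fin (s - 1) → Fin 3) (i : ℕ) : ℕ :=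
  if i = 0 then 0 else if h : i - 1 < s - 1 then aW3 (c ⟨i - 1, h⟩) else 1

/-- The function `β` of the element of `W_{s-1}` encoded by
`c : Fin (s-1) → Fin 3` (with the conventions `β_0 = 1`, `β_s = 0`). -/
def bet (s : ℕ) (c : Fin (s - 1) → Fin 3) (i : ℕ) : ℕ :=
  if i = 0 then 1 else if h : i - 1 < s - 1 then bW3 (c ⟨i - 1, h⟩) else 0

/-- The interleaved sequence `r_w(k) * w̃` (of length `2s - 1`, 0-indexed) for
the element `w ∈ W_{s-1}` encoded by `c`. -/
def newk (s : ℕ) (c : Fin (s - 1) → Fin 3) (k : ℕ → ℕ) (t : ℕ) : ℕ :=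
  if t % 2 = 0 then k (t / 2) + 1 - alph s c (t / 2 + 1) - bet s c (t / 2)
  else alph s c (t / 2 + 1) * bet s c (t / 2 + 1)

/-- `|w| = Σ_{i=1}^{s-1} α_i β_i` for the element `w ∈ W_{s-1}` encoded by `c`. -/
def wsize (s : ℕ) (c : Fin (s - 1) → Fin 3) : ℕ :=
  ∑ j ∈ Finset.range (s - 1), alph s c (j + 1) * bet s c (j + 1)

/-- The subgraph `g_w` of `Γ_k` for the element `w ∈ W_{s-1}` encoded by `c`. -/
def gwGraph3 (s : ℕ) (k : ℕ → ℕ) (c : Fin (s - 1) → Fin 3) : LGraph :=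
  gwGraph s k (alph s c) (bet s c)

/-- Union of two grid graphs (union of vertex sets and of edge sets). -/
def ugraph (γ δ : LGraph) : LGraph := ⟨γ.V ∪ δ.V, γ.E ∪ δ.E⟩

/-- The generating function `F_k(t) = Σ_{γ face of Γ_k} t^{dim γ}` of the
`f`-vector of the ladder diagram `Γ_k`, as a formal power series in `t`:
the coefficient of `t^d` is the number of faces of `Γ_k` of dimension `d`. -/
def fpol (s : ℕ) (k : ℕ → ℕ) : PowerSeries ℤ :=
  PowerSeries.mk fun d =>
    (Set.ncard {γ : LGraph | IsLadderFace s k γ ∧ ldim γ = (d : ℤ)} : ℤ)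

/-- The operator `Π_{i=1}^{s-1} (∂/∂x_i + ∂/∂x_{i+1} + t ∂/∂y_i)` applied to a
polynomial in the variables `x_1, x_2, … , y_1, y_2, …` (the variable `x_{i+1}`
is `Sum.inl i` and `y_{i+1}` is `Sum.inr i`) over `ℚ[t]`. -/
def Lfold (s : ℕ) (f : MvPolynomial (ℕ ⊕ ℕ) (Polynomial ℚ)) :
    MvPolynomial (ℕ ⊕ ℕ) (Polynomial ℚ) :=
  (List.range (s - 1)).foldl
    (fun g i =>
      MvPolynomial.pderiv (Sum.inl i) g + MvPolynomial.pderiv (Sum.inl (i + 1)) g +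
        (Polynomial.X : Polynomial ℚ) • MvPolynomial.pderiv (Sum.inr i) g) f

/-- The operator `D_w = Π_{i=1}^{s-1} (∂/∂x_i)^{1-α_i} (∂/∂x_{i+1})^{1-β_i}
(t ∂/∂y_i)^{α_i β_i}` for the element `w ∈ W_{s-1}` encoded by
`c : Fin (s-1) → Fin 3` (`0 ↦ (1,0)`, `1 ↦ (0,1)`, `2 ↦ (1,1)`). -/
def DfoldC (s : ℕ) (c : Fin (s - 1) → Fin 3)
    (f : MvPolynomial (ℕ ⊕ ℕ) (Polynomial ℚ)) : MvPolynomial (ℕ ⊕ ℕ) (Polynomial ℚ) :=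
  (List.finRange (s - 1)).foldl
    (fun g i =>
      if c i = 0 then MvPolynomial.pderiv (Sum.inl ((i : ℕ) + 1)) g
      else if c i = 1 then MvPolynomial.pderiv (Sum.inl (i : ℕ)) g
      else (Polynomial.X : Polynomial ℚ) • MvPolynomial.pderiv (Sum.inr (i : ℕ)) g) f

/-- The operator `D_w` for the element `w ∈ W_{s-1}` encoded by `α, β : ℕ → ℕ`. -/
def DfoldW (s : ℕ) (α β : ℕ → ℕ)
    (f : MvPolynomial (ℕ ⊕ ℕ) (Polynomial ℚ)) : MvPolynomial (ℕ ⊕ ℕ) (Polynomial ℚ) :=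
  (List.range (s - 1)).foldl
    (fun g j =>
      if α (j + 1) = 1 ∧ β (j + 1) = 1 then
        (Polynomial.X : Polynomial ℚ) • MvPolynomial.pderiv (Sum.inr j) g
      else if α (j + 1) = 1 then MvPolynomial.pderiv (Sum.inl (j + 1)) g
      else MvPolynomial.pderiv (Sum.inl j) g) f

/-- Substitution of `0` for all the variables `y_j = Sum.inr j`. -/
def setYzero :
    MvPolynomial (ℕ ⊕ ℕ) (Polynomial ℚ) →ₐ[Polynomial ℚ] MvPolynomial (ℕ ⊕ ℕ) (Polynomial ℚ) :=
  MvPolynomial.aeval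
    (Sum.elim (fun i => MvPolynomial.X (Sum.inl i)) fun _ => (0 : MvPolynomial (ℕ ⊕ ℕ) (Polynomial ℚ)))
end

/-!
The inequality `x_{i,j} ≤ x_{i,j+1}` belongs to the horizontal edge into `(i, j)` and the inequality
`x_{i+1,j} ≤ x_{i,j}` to the vertical one; `phiGC` keeps the edges whose inequality is not an
equality on all of `F`. For a pattern `x`, the comparison of `x_{i+1,j}` with `x_{i,j+1}` passes
through `x_{i,j}` (the two edges into `(i, j)`) and also through `x_{i+1,j+1}` (the two edges out of
`(i, j)`), so a strict edge into a vertex is always continued by a strict edge out of it and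
conversely: the kept edges form a union of positive paths. In the other direction, fill in a pattern
from the boundary inwards, copying a neighbour across each missing edge and taking the mean where
both incoming edges are present; the result is strict exactly at the edges of the graph, so no edge
is lost by `psiGC`. The entries at the vertices with two incoming edges parametrize the affine span
of the face, and there are `|E| - (|V| - 1)` of them because every vertex but the origin has one or
two incoming edges.
-/

section StrictComparison

/-- `a ≤ b`, with strict inequality exactly when `p` holds; here `p` says that the edge, or the
vertex, at which the two entries of a pattern are compared belongs to a graph. -/
def LEStrictIff {α : Type*} [Preorder α] (a b : α) (p : Prop) : Prop :=
  a ≤ b ∧ (a < b ↔ p)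

namespace LEStrictIff

variable {α : Type*} {p q : Prop}

lemma of_le [Preorder α] {a b : α} (h : a ≤ b) : LEStrictIff a b (a < b) :=
  ⟨h, Iff.rfl⟩

lemma eq_of_not [PartialOrder α] {a b : α} (h : LEStrictIff a b p) (hp : ¬p) : a = b :=
  h.1.eq_of_not_lt (mt h.2.1 hp)

lemma trans [PartialOrder α] {a b c : α} (h : LEStrictIff a b p) (h' : LEStrictIff b c q) :
    LEStrictIff a c (p ∨ q) := by
  refine ⟨h.1.trans h'.1, fun hac => ?_, ?_⟩
  · by_contra! hpq
    exact hac.ne ((h.eq_of_not hpq.1).trans (h'.eq_of_not hpq.2))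
  · rintro (hp | hq)
    · exact (h.2.2 hp).trans_le h'.1
    · exact h.1.trans_lt (h'.2.2 hq)

lemma ite_midpoint {a b : ℝ} (h : LEStrictIff a b (p ∨ q)) :
    LEStrictIff (if p then if q then (a + b) / 2 else a else b) b p ∧
      LEStrictIff a (if p then if q then (a + b) / 2 else a else b) q := by
  obtain ⟨hab, hlt⟩ := h
  by_cases hp : p <;> by_cases hq : q <;> simp only [hp, hq, or_self, or_true, or_false, iff_true,
    iff_false, not_lt, if_true, if_false, LEStrictIff, le_refl, lt_self_iff_false, true_and,
    and_true, iff_self] at hlt ⊢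
  · constructor <;> constructor <;> linarith
  · exact ⟨hab, hlt⟩
  · exact ⟨hab, hlt⟩
  · exact ⟨hab, hlt⟩

lemma eventually_add_mul_le {a b c d : ℝ} (h : LEStrictIff a b p) (hcd : ¬p → c = d) :
    ∀ᶠ ε in nhds (0 : ℝ), a + ε * c ≤ b + ε * d := by
  by_cases hp : p
  · have hlt : a + 0 * c < b + 0 * d := by simpa using h.2.2 hp
    have hc (e : ℝ) (r : ℝ) : ContinuousAt (fun ε : ℝ => e + ε * r) 0 := by fun_prop
    exact ((hc a c).eventually_lt (hc b d) hlt).mono fun _ => le_of_lt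
  · rw [h.eq_of_not hp, hcd hp]
    exact Filter.Eventually.of_forall fun _ => le_rfl

end LEStrictIff

end StrictComparison

lemma vectorSpan_eq_of_sub_mem_of_smul_add_mem {K V : Type*} [Field K] [AddCommGroup V] [Module K V]
    {S : Set V} {W : Submodule K V} {x : V} (hx : x ∈ S) (hsub : ∀ y ∈ S, y - x ∈ W)
    (hadd : ∀ w ∈ W, ∃ ε : K, ε ≠ 0 ∧ x + ε • w ∈ S) : vectorSpan K S = W := by
  rw [vectorSpan_eq_span_vsub_set_right K hx]
  refine le_antisymm (Submodule.span_le.2 ?_) fun w hw => ?_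
  · rintro _ ⟨y, hy, rfl⟩
    exact hsub y hy
  · obtain ⟨ε, hε, hmem⟩ := hadd w hw
    have : ε • w ∈ Submodule.span K ((· -ᵥ x) '' S) :=
      Submodule.subset_span ⟨_, hmem, add_sub_cancel_left _ _⟩
    exact (Submodule.smul_mem_iff _ hε).1 this

section GridEdges

/-- The horizontal edge with head `p`, which is only meaningful for `1 ≤ p.1`: the truncated
subtraction turns it into a loop at `p.1 = 0`. -/
abbrev hEdge (p : ℕ × ℕ) : (ℕ × ℕ) × (ℕ × ℕ) := ((p.1 - 1, p.2), p)

/-- The vertical edge with head `p`, which is only meaningful for `1 ≤ p.2`: the truncated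
subtraction turns it into a loop at `p.2 = 0`. -/
abbrev vEdge (p : ℕ × ℕ) : (ℕ × ℕ) × (ℕ × ℕ) := ((p.1, p.2 - 1), p)

lemma gridStep_iff {u v : ℕ × ℕ} :
    gridStep u v ↔ (1 ≤ v.1 ∧ (u, v) = hEdge v) ∨ (1 ≤ v.2 ∧ (u, v) = vEdge v) := by
  obtain ⟨a, b⟩ := u
  obtain ⟨c, d⟩ := v
  simp only [gridStep, Prod.mk.injEq, and_true]
  omega

lemma gridStep.add_eq {u v : ℕ × ℕ} (h : gridStep u v) : v.1 + v.2 = u.1 + u.2 + 1 := by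
  rcases h with rfl | rfl <;> dsimp only <;> omega

lemma gridStep.le {u v : ℕ × ℕ} (h : gridStep u v) : u ≤ v := by
  rcases h with rfl | rfl <;> simp [Prod.le_def]

lemma add_eq_of_gridStep {m : ℕ} {f : ℕ → ℕ × ℕ} (h0 : f 0 = (0, 0))
    (hf : ∀ i < m, gridStep (f i) (f (i + 1))) : ∀ i ≤ m, (f i).1 + (f i).2 = i := by
  intro i
  induction i with
  | zero => simp [h0]
  | succ i ih => intro hi; rw [(hf i hi).add_eq, ih (by omega)]

end GridEdges

namespace LGraph

/-- A local description of the faces of a ladder diagram: `γ` is a grid graph below the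
antidiagonal `a + b = n`, meeting it exactly in `T`, in which every vertex but the origin has a
predecessor and every vertex off the antidiagonal has a successor. -/
structure IsLocalFace (γ : LGraph) (n : ℕ) (T : Set (ℕ × ℕ)) : Prop where
  step : ∀ {u v}, (u, v) ∈ γ.E → gridStep u v
  tail_mem : ∀ {u v}, (u, v) ∈ γ.E → u ∈ γ.V
  head_mem : ∀ {u v}, (u, v) ∈ γ.E → v ∈ γ.V
  exists_pred : ∀ {v}, v ∈ γ.V → v ≠ (0, 0) → ∃ u, (u, v) ∈ γ.E
  exists_succ : ∀ {v}, v ∈ γ.V → v.1 + v.2 < n → ∃ w, (v, w) ∈ γ.E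
  add_le : ∀ {v}, v ∈ γ.V → v.1 + v.2 ≤ n
  mem_iff : ∀ {v}, v.1 + v.2 = n → (v ∈ γ.V ↔ v ∈ T)

namespace IsLocalFace

variable {γ γ' : LGraph} {n : ℕ} {T : Set (ℕ × ℕ)}

lemma one_le_of_hEdge_mem (h : γ.IsLocalFace n T) {p : ℕ × ℕ} (hp : hEdge p ∈ γ.E) :
    1 ≤ p.1 := by
  have := (h.step hp).add_eq
  dsimp only at this
  omega

lemma one_le_of_vEdge_mem (h : γ.IsLocalFace n T) {p : ℕ × ℕ} (hp : vEdge p ∈ γ.E) :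
    1 ≤ p.2 := by
  have := (h.step hp).add_eq
  dsimp only at this
  omega

lemma exists_edge_into_iff (h : γ.IsLocalFace n T) {p : ℕ × ℕ} :
    (∃ u, (u, p) ∈ γ.E) ↔ hEdge p ∈ γ.E ∨ vEdge p ∈ γ.E := by
  refine ⟨?_, by rintro (hp | hp) <;> exact ⟨_, hp⟩⟩
  rintro ⟨u, hu⟩
  rcases gridStep_iff.1 (h.step hu) with ⟨-, e⟩ | ⟨-, e⟩
  · exact Or.inl (e ▸ hu)
  · exact Or.inr (e ▸ hu)

lemma mem_V_iff_into (h : γ.IsLocalFace n T) {p : ℕ × ℕ} (hp : p ≠ (0, 0)) :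
    p ∈ γ.V ↔ hEdge p ∈ γ.E ∨ vEdge p ∈ γ.E := by
  rw [← h.exists_edge_into_iff]
  exact ⟨fun hV => h.exists_pred hV hp, fun ⟨_, hu⟩ => h.head_mem hu⟩

lemma mem_V_iff_outOf (h : γ.IsLocalFace n T) {i j : ℕ} (hij : i + j < n) :
    (i, j) ∈ γ.V ↔ hEdge (i + 1, j) ∈ γ.E ∨ vEdge (i, j + 1) ∈ γ.E := by
  constructor
  · intro hV
    obtain ⟨w, hw⟩ := h.exists_succ hV hij
    rcases h.step hw with rfl | rfl
    · exact Or.inl hw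
    · exact Or.inr hw
  · rintro (he | he) <;> exact h.tail_mem he

lemma mk_zero_mem (h : γ.IsLocalFace n T) (hT : (n, 0) ∈ T) {i : ℕ} (hi : i ≤ n) :
    (i, 0) ∈ γ.V := by
  induction hi using Nat.decreasingInduction with
  | self => exact (h.mem_iff rfl).2 hT
  | of_succ i _ ih =>
    rcases (h.mem_V_iff_into (by simp)).1 ih with he | he
    · exact h.tail_mem he
    · simpa using h.one_le_of_vEdge_mem he

lemma zero_mk_mem (h : γ.IsLocalFace n T) (hT : (0, n) ∈ T) {i : ℕ} (hi : i ≤ n) :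
    (0, i) ∈ γ.V := by
  induction hi using Nat.decreasingInduction with
  | self => exact (h.mem_iff (zero_add n)).2 hT
  | of_succ i _ ih =>
    rcases (h.mem_V_iff_into (by simp)).1 ih with he | he
    · simpa using h.one_le_of_hEdge_mem he
    · exact h.tail_mem he

lemma hEdge_mk_zero_mem_iff (h : γ.IsLocalFace n T) (hT : (n, 0) ∈ T) {i : ℕ} (hi : 1 ≤ i) :
    hEdge (i, 0) ∈ γ.E ↔ i ≤ n := by
  refine ⟨fun he => by simpa using h.add_le (h.head_mem he), fun hin => ?_⟩
  have hne : (i, 0) ≠ (0, 0) := by simpa using Nat.one_le_iff_ne_zero.1 hi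
  refine ((h.mem_V_iff_into hne).1 (h.mk_zero_mem hT hin)).resolve_right fun he => ?_
  simpa using h.one_le_of_vEdge_mem he

lemma vEdge_zero_mk_mem_iff (h : γ.IsLocalFace n T) (hT : (0, n) ∈ T) {i : ℕ} (hi : 1 ≤ i) :
    vEdge (0, i) ∈ γ.E ↔ i ≤ n := by
  refine ⟨fun he => by simpa using h.add_le (h.head_mem he), fun hin => ?_⟩
  have hne : (0, i) ≠ (0, 0) := by simpa using Nat.one_le_iff_ne_zero.1 hi
  refine ((h.mem_V_iff_into hne).1 (h.zero_mk_mem hT hin)).resolve_left fun he => ?_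
  simpa using h.one_le_of_hEdge_mem he

lemma eq_of_edges_iff (h : γ.IsLocalFace n T) (h' : γ'.IsLocalFace n T) (hT : (0, n) ∈ T)
    (hH : ∀ p : ℕ × ℕ, 1 ≤ p.1 → (hEdge p ∈ γ.E ↔ hEdge p ∈ γ'.E))
    (hV : ∀ p : ℕ × ℕ, 1 ≤ p.2 → (vEdge p ∈ γ.E ↔ vEdge p ∈ γ'.E)) : γ = γ' := by
  have hE : γ.E = γ'.E := by
    ext ⟨u, v⟩
    by_cases huv : gridStep u v
    · rcases gridStep_iff.1 huv with ⟨hv, e⟩ | ⟨hv, e⟩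
      · rw [e, hH v hv]
      · rw [e, hV v hv]
    · exact iff_of_false (fun he => huv (h.step he)) fun he => huv (h'.step he)
  refine LGraph.ext (Set.ext fun v => ?_) hE
  by_cases hv : v = (0, 0)
  · rw [hv]
    exact iff_of_true (h.zero_mk_mem hT n.zero_le) (h'.zero_mk_mem hT n.zero_le)
  · rw [h.mem_V_iff_into hv, h'.mem_V_iff_into hv, hE]

end IsLocalFace

lemma isLocalFace_of_iUnion {γ : LGraph} {n : ℕ} {T : Set (ℕ × ℕ)} {P : Set LGraph}
    (hP : ∀ p ∈ P, p.IsLocalFace n (p.V ∩ T)) (hV : γ.V = ⋃ p ∈ P, p.V)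
    (hE : γ.E = ⋃ p ∈ P, p.E) (hT : T ⊆ γ.V) : γ.IsLocalFace n T := by
  have mem_V {v} : v ∈ γ.V ↔ ∃ p ∈ P, v ∈ p.V := by simp [hV]
  have mem_E {e} : e ∈ γ.E ↔ ∃ p ∈ P, e ∈ p.E := by simp [hE]
  refine ⟨fun he => ?_, fun he => ?_, fun he => ?_, fun hv hne => ?_, fun hv hlt => ?_,
    fun hv => ?_, fun hn => ⟨fun hv => ?_, fun hv => hT hv⟩⟩
  · obtain ⟨p, hp, he⟩ := mem_E.1 he
    exact (hP p hp).step he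
  · obtain ⟨p, hp, he⟩ := mem_E.1 he
    exact mem_V.2 ⟨p, hp, (hP p hp).tail_mem he⟩
  · obtain ⟨p, hp, he⟩ := mem_E.1 he
    exact mem_V.2 ⟨p, hp, (hP p hp).head_mem he⟩
  · obtain ⟨p, hp, hv⟩ := mem_V.1 hv
    obtain ⟨u, hu⟩ := (hP p hp).exists_pred hv hne
    exact ⟨u, mem_E.2 ⟨p, hp, hu⟩⟩
  · obtain ⟨p, hp, hv⟩ := mem_V.1 hv
    obtain ⟨w, hw⟩ := (hP p hp).exists_succ hv hlt
    exact ⟨w, mem_E.2 ⟨p, hp, hw⟩⟩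
  · obtain ⟨p, hp, hv⟩ := mem_V.1 hv
    exact (hP p hp).add_le hv
  · obtain ⟨p, hp, hv⟩ := mem_V.1 hv
    exact (((hP p hp).mem_iff hn).1 hv).2

/-- `f 0, …, f m` is a walk in `γ` starting at the origin; the values of `f` beyond `m` are
irrelevant. -/
structure IsWalk (γ : LGraph) (m : ℕ) (f : ℕ → ℕ × ℕ) : Prop where
  zero : f 0 = (0, 0)
  step : ∀ i < m, (f i, f (i + 1)) ∈ γ.E

/-- The graph traced out by `f 0, …, f m`. -/
def ofWalk (m : ℕ) (f : ℕ → ℕ × ℕ) : LGraph :=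
  ⟨{v | ∃ i ≤ m, v = f i}, {e | ∃ i < m, e = (f i, f (i + 1))}⟩

section Walks

variable {γ : LGraph} {n m : ℕ} {T : Set (ℕ × ℕ)} {f : ℕ → ℕ × ℕ}

lemma IsWalk.snoc (hf : γ.IsWalk m f) {w : ℕ × ℕ} (hw : (f m, w) ∈ γ.E) :
    γ.IsWalk (m + 1) (Function.update f (m + 1) w) := by
  refine ⟨by simp [hf.zero], fun i hi => ?_⟩
  rcases Nat.lt_succ_iff_lt_or_eq.1 hi with hi | rfl
  · rw [Function.update_of_ne (by omega), Function.update_of_ne (by omega)]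
    exact hf.step i hi
  · rwa [Function.update_of_ne (by omega), Function.update_self]

lemma IsWalk.mem_V (hf : γ.IsWalk m f) (h : γ.IsLocalFace n T) (h0 : (0, 0) ∈ γ.V) :
    ∀ i ≤ m, f i ∈ γ.V
  | 0, _ => hf.zero ▸ h0
  | i + 1, hi => h.head_mem (hf.step i hi)

lemma IsWalk.ofWalk_le (hf : γ.IsWalk m f) (h : γ.IsLocalFace n T) (h0 : (0, 0) ∈ γ.V) :
    ofWalk m f ≤ γ := by
  constructor
  · rintro _ ⟨i, hi, rfl⟩
    exact hf.mem_V h h0 i hi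
  · rintro _ ⟨i, hi, rfl⟩
    exact hf.step i hi

namespace IsLocalFace

lemma exists_walk_to (h : γ.IsLocalFace n T) :
    ∀ (m : ℕ) {v : ℕ × ℕ}, v ∈ γ.V → v.1 + v.2 = m → ∃ f, γ.IsWalk m f ∧ f m = v
  | 0, v, _, hm => ⟨fun _ => (0, 0), ⟨rfl, by simp⟩, by ext <;> dsimp only <;> omega⟩
  | m + 1, v, hv, hm => by
    obtain ⟨u, hu⟩ := h.exists_pred hv (by rintro rfl; simp at hm)
    have hum : u.1 + u.2 = m := by have := (h.step hu).add_eq; omega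
    obtain ⟨f, hf, rfl⟩ := h.exists_walk_to m (h.tail_mem hu) hum
    exact ⟨_, hf.snoc hu, Function.update_self ..⟩

lemma exists_walk_extending (h : γ.IsLocalFace n T) (hf : γ.IsWalk m f) (hm : f m ∈ γ.V) :
    ∃ g, γ.IsWalk n g ∧ ∀ i ≤ m, g i = f i := by
  have hfm : (f m).1 + (f m).2 = m :=
    add_eq_of_gridStep hf.zero (fun i hi => h.step (hf.step i hi)) m le_rfl
  have hmn : m ≤ n := hfm ▸ h.add_le hm
  induction hd : n - m generalizing m f with
  | zero =>
    obtain rfl : m = n := by omega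
    exact ⟨f, hf, fun _ _ => rfl⟩
  | succ d ih =>
    obtain ⟨w, hw⟩ := h.exists_succ hm (by omega)
    have hwm := (h.step hw).add_eq
    obtain ⟨g, hg, hgf⟩ := ih (hf.snoc hw) (by simpa using h.head_mem hw)
      (by rw [Function.update_self]; omega) (by omega) (by omega)
    refine ⟨g, hg, fun i hi => ?_⟩
    rw [hgf i (by omega), Function.update_of_ne (by omega)]

lemma exists_walk_through_vertex (h : γ.IsLocalFace n T) {v : ℕ × ℕ} (hv : v ∈ γ.V) :
    ∃ f, γ.IsWalk n f ∧ v ∈ (ofWalk n f).V := by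
  obtain ⟨f, hf, hfv⟩ := h.exists_walk_to _ hv rfl
  obtain ⟨g, hg, hgf⟩ := h.exists_walk_extending hf (hfv.symm ▸ hv)
  exact ⟨g, hg, _, h.add_le hv, by rw [hgf _ le_rfl, hfv]⟩

lemma exists_walk_through_edge (h : γ.IsLocalFace n T) {u v : ℕ × ℕ} (he : (u, v) ∈ γ.E) :
    ∃ f, γ.IsWalk n f ∧ (u, v) ∈ (ofWalk n f).E := by
  obtain ⟨f, hf, hfu⟩ := h.exists_walk_to _ (h.tail_mem he) rfl
  set m := u.1 + u.2
  obtain ⟨g, hg, hgf⟩ := h.exists_walk_extending (hf.snoc (hfu ▸ he))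
    (by simpa using h.head_mem he)
  have hm : m + 1 ≤ n := by
    simpa only [m, ← (h.step he).add_eq] using h.add_le (h.head_mem he)
  refine ⟨g, hg, m, hm, ?_⟩
  rw [hgf m (by omega), hgf (m + 1) le_rfl, Function.update_self,
    Function.update_of_ne (by omega), hfu]

end IsLocalFace

end Walks

end LGraph

section LadderFaces

open LGraph

variable {s : ℕ} {k : ℕ → ℕ}

lemma nseq_mono (k : ℕ → ℕ) : Monotone (nseq k) := fun _ _ h =>
  Finset.sum_le_sum_of_subset (Finset.range_mono h)

lemma add_eq_of_mem_terminals {v : ℕ × ℕ} (h : v ∈ terminals s k) : v.1 + v.2 = nseq k s := by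
  obtain ⟨i, hi, rfl⟩ := h
  exact Nat.add_sub_cancel' (nseq_mono k hi)

lemma zero_mk_mem_terminals (s : ℕ) (k : ℕ → ℕ) : (0, nseq k s) ∈ terminals s k :=
  ⟨0, s.zero_le, by simp [nseq]⟩

lemma IsPositivePath.isLocalFace {p : LGraph} (hp : IsPositivePath s k p) :
    p.IsLocalFace (nseq k s) (p.V ∩ terminals s k) := by
  obtain ⟨m, f, h0, hm, hstep, -, hV, hE⟩ := hp
  have hsum := add_eq_of_gridStep h0 hstep
  obtain rfl : m = nseq k s := by rw [← hsum m le_rfl, add_eq_of_mem_terminals hm]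
  have mem_V {v} : v ∈ p.V ↔ ∃ i ≤ nseq k s, v = f i := by rw [hV]; rfl
  have mem_E {e} : e ∈ p.E ↔ ∃ i < nseq k s, e = (f i, f (i + 1)) := by rw [hE]; rfl
  refine ⟨fun he => ?_, fun he => ?_, fun he => ?_, fun hv hne => ?_, fun hv hlt => ?_,
    fun hv => ?_, fun hn => ⟨fun hv => ⟨hv, ?_⟩, fun hv => hv.1⟩⟩
  · obtain ⟨i, hi, e⟩ := mem_E.1 he
    obtain ⟨rfl, rfl⟩ := Prod.mk.inj e
    exact hstep i hi
  · obtain ⟨i, hi, e⟩ := mem_E.1 he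
    exact mem_V.2 ⟨i, hi.le, congrArg Prod.fst e⟩
  · obtain ⟨i, hi, e⟩ := mem_E.1 he
    exact mem_V.2 ⟨i + 1, hi, congrArg Prod.snd e⟩
  · obtain ⟨_ | i, hi, rfl⟩ := mem_V.1 hv
    · exact absurd h0 hne
    · exact ⟨f i, mem_E.2 ⟨i, hi, rfl⟩⟩
  · obtain ⟨i, hi, rfl⟩ := mem_V.1 hv
    exact ⟨f (i + 1), mem_E.2 ⟨i, by rwa [hsum i hi] at hlt, rfl⟩⟩
  · obtain ⟨i, hi, rfl⟩ := mem_V.1 hv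
    exact (hsum i hi).trans_le hi
  · obtain ⟨i, hi, rfl⟩ := mem_V.1 hv
    rwa [← hn, hsum i hi] at hm

lemma LGraph.IsWalk.isPositivePath {γ : LGraph} {f : ℕ → ℕ × ℕ}
    (h : γ.IsLocalFace (nseq k s) (terminals s k)) (hf : γ.IsWalk (nseq k s) f) :
    IsPositivePath s k (ofWalk (nseq k s) f) := by
  have h0 : (0, 0) ∈ γ.V := h.zero_mk_mem (zero_mk_mem_terminals s k) (Nat.zero_le _)
  have hstep : ∀ i < nseq k s, gridStep (f i) (f (i + 1)) := fun i hi => h.step (hf.step i hi)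
  have hlast : f (nseq k s) ∈ terminals s k :=
    (h.mem_iff (add_eq_of_gridStep hf.zero hstep _ le_rfl)).1 (hf.mem_V h h0 _ le_rfl)
  have hmono : MonotoneOn f (Set.Iic (nseq k s)) :=
    monotoneOn_of_le_succ Set.ordConnected_Iic fun i _ _ hi => (hstep i hi).le
  refine ⟨nseq k s, f, hf.zero, hlast, hstep, fun i hi => ⟨_, hlast, ?_⟩, rfl, rfl⟩
  exact Prod.le_def.1 (hmono hi Set.self_mem_Iic hi)

theorem isLadderFace_iff_isLocalFace {γ : LGraph} :
    IsLadderFace s k γ ↔ γ.IsLocalFace (nseq k s) (terminals s k) := by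
  constructor
  · rintro ⟨hT, P, hP, hV, hE⟩
    exact isLocalFace_of_iUnion (fun p hp => (hP p hp).isLocalFace) hV hE hT
  intro h
  have h0 : (0, 0) ∈ γ.V := h.zero_mk_mem (zero_mk_mem_terminals s k) (Nat.zero_le _)
  refine ⟨fun v hv => (h.mem_iff (add_eq_of_mem_terminals hv)).2 hv,
    {p | IsPositivePath s k p ∧ p ≤ γ}, fun p hp => hp.1, ?_, ?_⟩
  · refine subset_antisymm (fun v hv => ?_) (Set.iUnion₂_subset fun p hp => hp.2.1)
    obtain ⟨f, hf, hvf⟩ := h.exists_walk_through_vertex hv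
    exact Set.mem_iUnion₂.2 ⟨_, ⟨hf.isPositivePath h, hf.ofWalk_le h h0⟩, hvf⟩
  · refine subset_antisymm (fun e he => ?_) (Set.iUnion₂_subset fun p hp => hp.2.2)
    obtain ⟨f, hf, hef⟩ := h.exists_walk_through_edge he
    exact Set.mem_iUnion₂.2 ⟨_, ⟨hf.isPositivePath h, hf.ofWalk_le h h0⟩, hef⟩

end LadderFaces

section Blocks

variable {s n : ℕ} {k : ℕ → ℕ} {lam : ℕ → ℝ}

/-- The points `(i, n - i)` of the antidiagonal with `i = 0`, `i = n` or a strict descent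
`λ_{i+1} < λ_i`: the terminal vertices, expressed through `λ` instead of `k`. -/
def descents (n : ℕ) (lam : ℕ → ℝ) : Set (ℕ × ℕ) :=
  {v | v.1 + v.2 = n ∧ (v.1 = 0 ∨ v.2 = 0 ∨ lam (v.1 + 1) < lam v.1)}

lemma zero_mk_mem_descents (n : ℕ) (lam : ℕ → ℝ) : (0, n) ∈ descents n lam :=
  ⟨zero_add n, Or.inl rfl⟩

lemma mk_zero_mem_descents (n : ℕ) (lam : ℕ → ℝ) : (n, 0) ∈ descents n lam :=
  ⟨add_zero n, Or.inr (Or.inl rfl)⟩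

lemma mem_descents_iff {i j : ℕ} (h : (i, j) ∈ GCIdx n) (hij : i + j = n) :
    (i, j) ∈ descents n lam ↔ lam (i + 1) < lam i := by
  have hi : i ≠ 0 := Nat.one_le_iff_ne_zero.1 h.1
  have hj : j ≠ 0 := Nat.one_le_iff_ne_zero.1 h.2.1
  simp [descents, hij, hi, hj]

lemma exists_nseq_lt_le (k : ℕ → ℕ) (s : ℕ) {a : ℕ} (ha : 1 ≤ a) (has : a ≤ nseq k s) :
    ∃ j < s, nseq k j < a ∧ a ≤ nseq k (j + 1) := by
  induction s with
  | zero =>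
    simp only [nseq, Finset.range_zero, Finset.sum_empty] at has
    omega
  | succ s ih =>
    rcases le_or_gt a (nseq k s) with h | h
    · obtain ⟨j, hj, hja⟩ := ih h
      exact ⟨j, by omega, hja⟩
    · exact ⟨s, s.lt_succ_self, h, has⟩

namespace HasBlockStructure

lemma lt_or_eq (h : HasBlockStructure s k lam) {i : ℕ} (hi : 1 ≤ i) (hin : i < nseq k s) :
    (lam (i + 1) < lam i ∧ ∃ j ≤ s, i = nseq k j) ∨
      (lam (i + 1) = lam i ∧ ∀ j, i ≠ nseq k j) := by
  obtain ⟨b, hb, hbi, hib⟩ := exists_nseq_lt_le k s hi hin.le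
  rcases hib.lt_or_eq with hib | rfl
  · refine Or.inr ⟨(h.1 b hb i (i + 1) hbi i.le_succ hib).symm, ?_⟩
    rintro j rfl
    have := (nseq_mono k).reflect_lt hbi
    have := (nseq_mono k).reflect_lt hib
    omega
  · exact Or.inl ⟨h.2 (b + 1) (by omega) ((nseq_mono k).reflect_lt hin), b + 1, hb, rfl⟩

lemma antitoneOn (h : HasBlockStructure s k lam) : AntitoneOn lam (Set.Icc 1 (nseq k s)) :=
  antitoneOn_of_succ_le Set.ordConnected_Icc fun i _ hi hi' => by
    rcases h.lt_or_eq hi.1 hi'.2 with ⟨hlt, -⟩ | ⟨heq, -⟩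
    · exact hlt.le
    · exact heq.le

lemma terminals_eq_descents (h : HasBlockStructure s k lam) :
    terminals s k = descents (nseq k s) lam := by
  ext ⟨a, b⟩
  constructor
  · intro hv
    refine ⟨add_eq_of_mem_terminals hv, ?_⟩
    by_contra! hne
    obtain ⟨j, -, hj⟩ := id hv
    have hab : a + b = nseq k s := add_eq_of_mem_terminals hv
    rcases h.lt_or_eq (i := a) (by omega) (by omega) with ⟨hlt, -⟩ | ⟨-, hn⟩
    · exact hlt.not_ge hne.2.2
    · exact hn j (congrArg Prod.fst hj)
  · rintro ⟨hab, hv⟩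
    suffices ∃ j ≤ s, a = nseq k j by
      obtain ⟨j, hj, rfl⟩ := this
      exact ⟨j, hj, Prod.ext rfl (Nat.eq_sub_of_add_eq' hab)⟩
    dsimp only at hab hv
    rcases Nat.eq_zero_or_pos a with rfl | ha
    · exact ⟨0, s.zero_le, by simp [nseq]⟩
    rcases Nat.eq_zero_or_pos b with rfl | hb
    · exact ⟨s, le_rfl, hab⟩
    rcases h.lt_or_eq ha (by omega) with ⟨-, hj⟩ | ⟨heq, -⟩
    · exact hj
    · rcases hv with hv | hv | hv
      · omega
      · omega
      · exact absurd heq hv.ne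

end HasBlockStructure

lemma isLadderFace_iff_isLocalFace_descents (h : HasBlockStructure s k lam) {γ : LGraph} :
    IsLadderFace s k γ ↔ γ.IsLocalFace (nseq k s) (descents (nseq k s) lam) := by
  rw [isLadderFace_iff_isLocalFace, h.terminals_eq_descents]

end Blocks

section Patterns

variable {n i j : ℕ} {lam : ℕ → ℝ} {x y : GCIdx n → ℝ} {p : ℕ × ℕ}

lemma GCIdx.finite (n : ℕ) : (GCIdx n).Finite :=
  (Set.finite_Iic (n, n)).subset fun p hp => by
    have := hp.2.2
    exact ⟨by omega, by omega⟩

@[elab_as_elim]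
lemma GCIdx.induction {P : ℕ → ℕ → Prop}
    (step : ∀ i j, (i, j) ∈ GCIdx n → ((i, j + 1) ∈ GCIdx n → P i (j + 1)) →
      ((i + 1, j) ∈ GCIdx n → P (i + 1) j) → P i j)
    (h : (i, j) ∈ GCIdx n) : P i j := by
  induction hd : n - (i + j) generalizing i j with
  | zero =>
    refine step i j h (fun h' => ?_) fun h' => ?_ <;> have := h'.2.2 <;> omega
  | succ d ih => exact step i j h (fun h' => ih h' (by omega)) fun h' => ih h' (by omega)

lemma gcEntry_of_mem (h : p ∈ GCIdx n) : gcEntry n lam x p = x ⟨p, h⟩ :=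
  dif_pos h

lemma gcEntry_of_lt (h : n < p.1 + p.2) : gcEntry n lam x p = lam p.1 :=
  dif_neg fun hp => h.not_ge hp.2.2

lemma gcEntry_zero_eq_zero_of_imp (h : p ∈ GCIdx n → gcEntry n 0 x p = 0) :
    gcEntry n 0 x p = 0 := by
  by_contra h0
  exact h0 (dif_neg (mt h h0))

lemma gcEntry_add : gcEntry n lam (x + y) p = gcEntry n lam x p + gcEntry n 0 y p := by
  unfold gcEntry
  split_ifs <;> simp

lemma gcEntry_sub : gcEntry n 0 (x - y) p = gcEntry n lam x p - gcEntry n lam y p := by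
  unfold gcEntry
  split_ifs <;> simp

lemma gcEntry_smul (c : ℝ) : gcEntry n 0 (c • x) p = c * gcEntry n 0 x p := by
  unfold gcEntry
  split_ifs <;> simp

/-- The array filled in from the antidiagonal `i + j = n + 1`, where it is `lam`, by the rule that
computes the entry at `p` from the entries above it and to its right. One rule gives the point
`barX`, another one the directions of a face. -/
def fill (n : ℕ) (lam : ℕ → ℝ) (f : ℕ × ℕ → ℝ → ℝ → ℝ) (i j : ℕ) : ℝ :=
  if i + j ≤ n then f (i, j) (fill n lam f i (j + 1)) (fill n lam f (i + 1) j) else lam i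
termination_by n + 1 - (i + j)

lemma exists_gcEntry_eq (n : ℕ) (lam : ℕ → ℝ) (f : ℕ × ℕ → ℝ → ℝ → ℝ) :
    ∃ x, ∀ i j, (i, j) ∈ GCIdx n →
      gcEntry n lam x (i, j) =
        f (i, j) (gcEntry n lam x (i, j + 1)) (gcEntry n lam x (i + 1, j)) := by
  set x : GCIdx n → ℝ := fun p => fill n lam f p.1.1 p.1.2
  have hx {i j : ℕ} (hi : 1 ≤ i) (hj : 1 ≤ j) : gcEntry n lam x (i, j) = fill n lam f i j := by
    by_cases h : i + j ≤ n
    · exact gcEntry_of_mem ⟨hi, hj, h⟩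
    · rw [gcEntry_of_lt (not_le.1 h), fill, if_neg h]
  refine ⟨x, fun i j ⟨hi, hj, hij⟩ => ?_⟩
  rw [hx hi hj, hx hi (by omega), hx (by omega) hj, fill, if_pos hij]

end Patterns

section GraphOfFace

variable {n i j : ℕ} {lam : ℕ → ℝ} {F : Set (GCIdx n → ℝ)} {x : GCIdx n → ℝ}

lemma gridStep_of_mem_phiE {u v : ℕ × ℕ} (h : (u, v) ∈ phiE n lam F) : gridStep u v := by
  simp only [gridStep_iff, phiE, Set.mem_ofPred_eq, Prod.mk.injEq] at h ⊢
  rcases h with ⟨i, -, ⟨rfl, rfl⟩ | ⟨rfl, rfl⟩⟩ | ⟨i, j, h, ⟨rfl, rfl⟩, -⟩ |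
    ⟨i, j, h, ⟨rfl, rfl⟩, -⟩
  · simp
  · simp
  · simp [h.1]
  · simp [h.2.1]

lemma hEdge_mem_phiE (hi : 1 ≤ i) :
    hEdge (i, j) ∈ phiE n lam F ↔
      i + j ≤ n ∧ (j = 0 ∨ ∃ x ∈ F, gcEntry n lam x (i, j) < gcEntry n lam x (i, j + 1)) := by
  constructor
  · simp only [phiE, Set.mem_ofPred_eq, Prod.mk.injEq]
    rintro (⟨a, ha, h | h⟩ | ⟨a, b, hab, ⟨-, rfl, rfl⟩, hx⟩ | ⟨a, b, -, h, -⟩)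
    · omega
    · exact ⟨by omega, Or.inl h.2.2⟩
    · exact ⟨hab.2.2, Or.inr hx⟩
    · omega
  · rintro ⟨hij, h⟩
    rcases Nat.eq_zero_or_pos j with rfl | hj
    · exact Or.inl ⟨i - 1, by omega, Or.inr (by simp [hi])⟩
    · exact Or.inr (Or.inl ⟨i, j, ⟨hi, hj, hij⟩, rfl, h.resolve_left hj.ne'⟩)

lemma vEdge_mem_phiE (hj : 1 ≤ j) :
    vEdge (i, j) ∈ phiE n lam F ↔
      i + j ≤ n ∧ (i = 0 ∨ ∃ x ∈ F, gcEntry n lam x (i + 1, j) < gcEntry n lam x (i, j)) := by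
  constructor
  · simp only [phiE, Set.mem_ofPred_eq, Prod.mk.injEq]
    rintro (⟨a, ha, h | h⟩ | ⟨a, b, -, h, -⟩ | ⟨a, b, hab, ⟨-, rfl, rfl⟩, hx⟩)
    · exact ⟨by omega, Or.inl h.2.1⟩
    · omega
    · omega
    · exact ⟨hab.2.2, Or.inr hx⟩
  · rintro ⟨hij, h⟩
    rcases Nat.eq_zero_or_pos i with rfl | hi
    · exact Or.inl ⟨j - 1, by omega, Or.inl (by simp [hj])⟩
    · exact Or.inr (Or.inr ⟨i, j, ⟨hi, hj, hij⟩, rfl, h.resolve_left hi.ne'⟩)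

lemma lt_diag_iff_into (hx : x ∈ GCPoly n lam) (h : (i, j) ∈ GCIdx n) :
    gcEntry n lam x (i + 1, j) < gcEntry n lam x (i, j + 1) ↔
      gcEntry n lam x (i, j) < gcEntry n lam x (i, j + 1) ∨
        gcEntry n lam x (i + 1, j) < gcEntry n lam x (i, j) :=
  ((LEStrictIff.of_le (hx i j h).2).trans (.of_le (hx i j h).1)).2.trans or_comm

lemma lt_diag_iff_outOf (hx : x ∈ GCPoly n lam) (h : (i, j) ∈ GCIdx n) (hij : i + j < n) :
    gcEntry n lam x (i + 1, j) < gcEntry n lam x (i, j + 1) ↔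
      gcEntry n lam x (i + 1, j) < gcEntry n lam x (i + 1, j + 1) ∨
        gcEntry n lam x (i + 1, j + 1) < gcEntry n lam x (i, j + 1) :=
  have h_right : (i + 1, j) ∈ GCIdx n := ⟨by simp, h.2.1, by dsimp only; omega⟩
  have h_up : (i, j + 1) ∈ GCIdx n := ⟨h.1, by simp, by dsimp only; omega⟩
  ((LEStrictIff.of_le (hx _ _ h_right).1).trans (.of_le (hx _ _ h_up).2)).2

/-- The vertices of `phiGC n lam F`, described by comparing the entries above and to the right. -/
def phiV (n : ℕ) (lam : ℕ → ℝ) (F : Set (GCIdx n → ℝ)) : Set (ℕ × ℕ) :=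
  {p | p.1 + p.2 ≤ n ∧ (p.1 = 0 ∨ p.2 = 0 ∨
    ∃ x ∈ F, gcEntry n lam x (p.1 + 1, p.2) < gcEntry n lam x (p.1, p.2 + 1))}

lemma mem_phiV_iff_into (hF : F ⊆ GCPoly n lam) (h : (i, j) ≠ (0, 0)) :
    (i, j) ∈ phiV n lam F ↔
      (1 ≤ i ∧ hEdge (i, j) ∈ phiE n lam F) ∨ (1 ≤ j ∧ vEdge (i, j) ∈ phiE n lam F) := by
  rcases Nat.eq_zero_or_pos i with rfl | hi
  · have hj : 1 ≤ j := Nat.one_le_iff_ne_zero.2 fun hj => h (by rw [hj])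
    simp [phiV, vEdge_mem_phiE, hj]
  rcases Nat.eq_zero_or_pos j with rfl | hj
  · simp [phiV, hEdge_mem_phiE hi, Nat.one_le_iff_ne_zero.1 hi, Nat.one_le_iff_ne_zero.2 hi.ne']
  have hlt (hij : i + j ≤ n) := fun x hx => lt_diag_iff_into (hF hx) (x := x) ⟨hi, hj, hij⟩
  rw [hEdge_mem_phiE hi, vEdge_mem_phiE hj]
  simp only [phiV, Set.mem_ofPred_eq, hi.ne', hj.ne', false_or]
  grind

lemma mem_phiV_iff_outOf (hF : F ⊆ GCPoly n lam) (hij : i + j < n) :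
    (i, j) ∈ phiV n lam F ↔
      hEdge (i + 1, j) ∈ phiE n lam F ∨ vEdge (i, j + 1) ∈ phiE n lam F := by
  rw [hEdge_mem_phiE i.succ_pos, vEdge_mem_phiE j.succ_pos]
  have hlt (hi : 1 ≤ i) (hj : 1 ≤ j) := fun x hx =>
    lt_diag_iff_outOf (hF hx) (x := x) ⟨hi, hj, hij.le⟩ hij
  simp only [phiV, Set.mem_ofPred_eq]
  grind

lemma mem_phiV_iff_mem_descents (hne : F.Nonempty) {p : ℕ × ℕ} (hp : p.1 + p.2 = n) :
    p ∈ phiV n lam F ↔ p ∈ descents n lam := by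
  have h_right (x : GCIdx n → ℝ) : gcEntry n lam x (p.1 + 1, p.2) = lam (p.1 + 1) :=
    gcEntry_of_lt (by dsimp only; omega)
  have h_up (x : GCIdx n → ℝ) : gcEntry n lam x (p.1, p.2 + 1) = lam p.1 :=
    gcEntry_of_lt (by dsimp only; omega)
  have hex : (∃ x, x ∈ F) ↔ True := iff_true_intro hne
  simp only [phiV, descents, Set.mem_ofPred_eq, h_right, h_up, exists_and_right, hex, true_and,
    hp, le_refl]

lemma phiGC_V (hn : 0 < n) (hF : F ⊆ GCPoly n lam) : (phiGC n lam F).V = phiV n lam F := by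
  ext ⟨i, j⟩
  constructor
  · rintro ⟨⟨u, v⟩, he, rfl | rfl⟩
    · rcases gridStep_of_mem_phiE he with rfl | rfl
      · have := ((hEdge_mem_phiE i.succ_pos).1 he).1
        exact (mem_phiV_iff_outOf hF (by omega)).2 (Or.inl he)
      · have := ((vEdge_mem_phiE j.succ_pos).1 he).1
        exact (mem_phiV_iff_outOf hF (by omega)).2 (Or.inr he)
    · have hne : (i, j) ≠ (0, 0) := by
        rintro ⟨⟩
        have := (gridStep_of_mem_phiE he).add_eq
        omega
      refine (mem_phiV_iff_into hF hne).2 ?_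
      rcases gridStep_iff.1 (gridStep_of_mem_phiE he) with ⟨hi, e⟩ | ⟨hj, e⟩
      · exact Or.inl ⟨hi, e ▸ he⟩
      · exact Or.inr ⟨hj, e ▸ he⟩
  · intro h
    by_cases hne : (i, j) = (0, 0)
    · obtain ⟨rfl, rfl⟩ := Prod.mk.inj hne
      rcases (mem_phiV_iff_outOf hF hn).1 h with he | he <;> exact ⟨_, he, Or.inl rfl⟩
    · rcases (mem_phiV_iff_into hF hne).1 h with ⟨-, he⟩ | ⟨-, he⟩ <;> exact ⟨_, he, Or.inr rfl⟩

lemma isLocalFace_phiGC (hn : 0 < n) (hF : F ⊆ GCPoly n lam) (hne : F.Nonempty) :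
    (phiGC n lam F).IsLocalFace n (descents n lam) where
  step := gridStep_of_mem_phiE
  tail_mem he := ⟨_, he, Or.inl rfl⟩
  head_mem he := ⟨_, he, Or.inr rfl⟩
  exists_pred hv hv0 := by
    rw [phiGC_V hn hF] at hv
    rcases (mem_phiV_iff_into hF hv0).1 hv with ⟨-, he⟩ | ⟨-, he⟩ <;> exact ⟨_, he⟩
  exists_succ hv hlt := by
    rw [phiGC_V hn hF] at hv
    rcases (mem_phiV_iff_outOf hF hlt).1 hv with he | he <;> exact ⟨_, he⟩
  add_le hv := by
    rw [phiGC_V hn hF] at hv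
    exact hv.1
  mem_iff hv := by rw [phiGC_V hn hF, mem_phiV_iff_mem_descents hne hv]

end GraphOfFace

section FaceOfGraph

variable {n : ℕ} {lam : ℕ → ℝ} {F F' : Set (GCIdx n → ℝ)} {γ γ' : LGraph}

lemma IsGCFace.subset_GCPoly (hF : IsGCFace n lam F) : F ⊆ GCPoly n lam := by
  obtain ⟨-, SH, SV, -, -, rfl⟩ := hF
  exact fun x hx => hx.1

lemma phiGC_mono (h : F ⊆ F') : phiGC n lam F ≤ phiGC n lam F' := by
  have hE : phiE n lam F ⊆ phiE n lam F' := by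
    rintro e (he | ⟨i, j, hij, rfl, x, hx, hlt⟩ | ⟨i, j, hij, rfl, x, hx, hlt⟩)
    · exact Or.inl he
    · exact Or.inr (Or.inl ⟨i, j, hij, rfl, x, h hx, hlt⟩)
    · exact Or.inr (Or.inr ⟨i, j, hij, rfl, x, h hx, hlt⟩)
  exact ⟨fun v ⟨e, he, hv⟩ => ⟨e, hE he, hv⟩, hE⟩

lemma psiGC_mono (h : γ ≤ γ') : psiGC n lam γ ⊆ psiGC n lam γ' := fun _ hx =>
  ⟨hx.1, fun i j hij =>
    ⟨fun he => (hx.2 i j hij).1 (mt (@h.2 _) he), fun he => (hx.2 i j hij).2 (mt (@h.2 _) he)⟩⟩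

lemma subset_psiGC_phiGC (hF : F ⊆ GCPoly n lam) : F ⊆ psiGC n lam (phiGC n lam F) := by
  refine fun x hx => ⟨hF hx, fun i j hij => ⟨fun he => ?_, fun he => ?_⟩⟩
  · refine (hF hx i j hij).1.eq_of_not_lt fun hlt => he ?_
    exact (hEdge_mem_phiE hij.1).2 ⟨hij.2.2, Or.inr ⟨x, hx, hlt⟩⟩
  · refine ((hF hx i j hij).2.eq_of_not_lt fun hlt => he ?_).symm
    exact (vEdge_mem_phiE hij.2.1).2 ⟨hij.2.2, Or.inr ⟨x, hx, hlt⟩⟩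

lemma IsGCFace.psiGC_phiGC (hF : IsGCFace n lam F) : psiGC n lam (phiGC n lam F) = F := by
  refine subset_antisymm ?_ (subset_psiGC_phiGC hF.subset_GCPoly)
  obtain ⟨-, SH, SV, hSH, hSV, rfl⟩ := hF
  refine fun x hx => ⟨hx.1, fun p hp => Eq.symm ?_, fun p hp => ?_⟩
  · refine (hx.2 _ _ (hSH hp)).1 fun he => ?_
    obtain ⟨-, h0 | ⟨y, hy, hlt⟩⟩ := (hEdge_mem_phiE (hSH hp).1).1 he
    · exact Nat.one_le_iff_ne_zero.1 (hSH hp).2.1 h0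
    · exact hlt.ne' (hy.2.1 p hp)
  · refine (hx.2 _ _ (hSV hp)).2 fun he => ?_
    obtain ⟨-, h0 | ⟨y, hy, hlt⟩⟩ := (vEdge_mem_phiE (hSV hp).2.1).1 he
    · exact Nat.one_le_iff_ne_zero.1 (hSV hp).1 h0
    · exact hlt.ne' (hy.2.2 p hp)

/-- A pattern whose defining inequalities are strict exactly at the edges in `E`: a relative
interior point of the corresponding face. -/
def IsGeneric (n : ℕ) (lam : ℕ → ℝ) (E : Set ((ℕ × ℕ) × (ℕ × ℕ))) (x : GCIdx n → ℝ) : Prop :=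
  ∀ i j, (i, j) ∈ GCIdx n →
    LEStrictIff (gcEntry n lam x (i, j)) (gcEntry n lam x (i, j + 1)) (hEdge (i, j) ∈ E) ∧
    LEStrictIff (gcEntry n lam x (i + 1, j)) (gcEntry n lam x (i, j)) (vEdge (i, j) ∈ E)

lemma IsGeneric.mem_psiGC {x : GCIdx n → ℝ} (hx : IsGeneric n lam γ.E x) : x ∈ psiGC n lam γ :=
  ⟨fun i j hij => ⟨(hx i j hij).1.1, (hx i j hij).2.1⟩,
    fun i j hij => ⟨(hx i j hij).1.eq_of_not, fun he => ((hx i j hij).2.eq_of_not he).symm⟩⟩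

lemma LGraph.IsLocalFace.leStrictIff_lam (h : γ.IsLocalFace n (descents n lam))
    (hlam : AntitoneOn lam (Set.Icc 1 n)) {i j : ℕ} (hij : (i, j) ∈ GCIdx n) (hn : i + j = n) :
    LEStrictIff (lam (i + 1)) (lam i) ((i, j) ∈ γ.V) := by
  have hj : 1 ≤ j := hij.2.1
  refine ⟨hlam ⟨hij.1, by omega⟩ ⟨i.succ_pos, by omega⟩ i.le_succ, ?_⟩
  rw [h.mem_iff hn, mem_descents_iff hij hn]

lemma LGraph.IsLocalFace.exists_isGeneric (h : γ.IsLocalFace n (descents n lam))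
    (hlam : AntitoneOn lam (Set.Icc 1 n)) : ∃ x, IsGeneric n lam γ.E x := by
  obtain ⟨x, hx⟩ := exists_gcEntry_eq n lam fun p up right =>
    if hEdge p ∈ γ.E then if vEdge p ∈ γ.E then (right + up) / 2 else right else up
  refine ⟨x, fun i j hij => ?_⟩
  refine GCIdx.induction (fun i j hij ih_up ih_right => ?_) hij
  have hdiag : LEStrictIff (gcEntry n lam x (i + 1, j)) (gcEntry n lam x (i, j + 1))
      ((i, j) ∈ γ.V) := by
    rcases hij.2.2.lt_or_eq with hlt | heq
    · rw [h.mem_V_iff_outOf hlt]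
      exact (ih_right ⟨by simp, hij.2.1, by dsimp only at *; omega⟩).1.trans
        (ih_up ⟨hij.1, by simp, by dsimp only at *; omega⟩).2
    · rw [gcEntry_of_lt (by dsimp only at *; omega), gcEntry_of_lt (by dsimp only at *; omega)]
      exact h.leStrictIff_lam hlam hij heq
  have hne : (i, j) ≠ (0, 0) := by
      rintro ⟨⟩
      simpa using hij.1
  rw [h.mem_V_iff_into hne] at hdiag
  rw [hx i j hij]
  exact hdiag.ite_midpoint

lemma LGraph.IsLocalFace.isGCFace_psiGC (h : γ.IsLocalFace n (descents n lam))
    (hlam : AntitoneOn lam (Set.Icc 1 n)) : IsGCFace n lam (psiGC n lam γ) := by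
  obtain ⟨x, hx⟩ := h.exists_isGeneric hlam
  refine ⟨⟨x, hx.mem_psiGC⟩, {p ∈ GCIdx n | hEdge p ∉ γ.E}, {p ∈ GCIdx n | vEdge p ∉ γ.E},
    Set.sep_subset _ _, Set.sep_subset _ _, Set.ext fun y => and_congr_right fun _ => ?_⟩
  constructor
  · exact fun hy => ⟨fun p hp => ((hy _ _ hp.1).1 hp.2).symm, fun p hp => (hy _ _ hp.1).2 hp.2⟩
  · exact fun hy i j hij =>
      ⟨fun he => (hy.1 (i, j) ⟨hij, he⟩).symm, fun he => hy.2 (i, j) ⟨hij, he⟩⟩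

lemma LGraph.IsLocalFace.phiGC_psiGC (hn : 0 < n) (h : γ.IsLocalFace n (descents n lam))
    (hlam : AntitoneOn lam (Set.Icc 1 n)) : phiGC n lam (psiGC n lam γ) = γ := by
  obtain ⟨x, hx⟩ := h.exists_isGeneric hlam
  have hphi : (phiGC n lam (psiGC n lam γ)).IsLocalFace n (descents n lam) :=
    isLocalFace_phiGC hn (fun y hy => hy.1) ⟨x, hx.mem_psiGC⟩
  refine hphi.eq_of_edges_iff h (zero_mk_mem_descents n lam) ?_ ?_
  · rintro ⟨i, j⟩ hi
    rcases Nat.eq_zero_or_pos j with rfl | hj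
    · have hT := mk_zero_mem_descents n lam
      rw [hphi.hEdge_mk_zero_mem_iff hT hi, h.hEdge_mk_zero_mem_iff hT hi]
    refine (hEdge_mem_phiE hi).trans ⟨?_, fun he => ?_⟩
    · rintro ⟨hij, h0 | ⟨y, hy, hlt⟩⟩
      · exact absurd h0 hj.ne'
      · exact by_contra fun he => hlt.ne ((hy.2 i j ⟨hi, hj, hij⟩).1 he)
    · have hij : i + j ≤ n := h.add_le (h.head_mem he)
      exact ⟨hij, Or.inr ⟨x, hx.mem_psiGC, (hx i j ⟨hi, hj, hij⟩).1.2.2 he⟩⟩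
  · rintro ⟨i, j⟩ hj
    rcases Nat.eq_zero_or_pos i with rfl | hi
    · have hT := zero_mk_mem_descents n lam
      rw [hphi.vEdge_zero_mk_mem_iff hT hj, h.vEdge_zero_mk_mem_iff hT hj]
    refine (vEdge_mem_phiE hj).trans ⟨?_, fun he => ?_⟩
    · rintro ⟨hij, h0 | ⟨y, hy, hlt⟩⟩
      · exact absurd h0 hi.ne'
      · exact by_contra fun he => hlt.ne' ((hy.2 i j ⟨hi, hj, hij⟩).2 he)
    · have hij : i + j ≤ n := h.add_le (h.head_mem he)
      exact ⟨hij, Or.inr ⟨x, hx.mem_psiGC, (hx i j ⟨hi, hj, hij⟩).2.2.2 he⟩⟩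

end FaceOfGraph

section Dimension

/-- The vertices with two incoming edges. They index coordinates on the affine span of the face with
edge set `E`, so their number is the dimension of the face. -/
def doubleHeads (E : Set ((ℕ × ℕ) × (ℕ × ℕ))) : Set (ℕ × ℕ) :=
  {p | hEdge p ∈ E ∧ vEdge p ∈ E}

namespace LGraph.IsLocalFace

variable {γ : LGraph} {n : ℕ} {T : Set (ℕ × ℕ)}

lemma finite_V (h : γ.IsLocalFace n T) : γ.V.Finite :=
  (Set.finite_Iic (n, n)).subset fun v hv => by
    have := h.add_le hv
    exact ⟨by omega, by omega⟩

lemma doubleHeads_subset (h : γ.IsLocalFace n T) : doubleHeads γ.E ⊆ GCIdx n := fun _ hp =>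
  ⟨h.one_le_of_hEdge_mem hp.1, h.one_le_of_vEdge_mem hp.2, h.add_le (h.head_mem hp.1)⟩

lemma E_eq_union (h : γ.IsLocalFace n T) :
    γ.E = hEdge '' (hEdge ⁻¹' γ.E) ∪ vEdge '' (vEdge ⁻¹' γ.E) := by
  refine subset_antisymm ?_ (Set.union_subset (Set.image_preimage_subset _ _)
    (Set.image_preimage_subset _ _))
  rintro ⟨u, v⟩ he
  rcases gridStep_iff.1 (h.step he) with ⟨-, e⟩ | ⟨-, e⟩ <;> rw [e] at he ⊢
  · exact Or.inl (Set.mem_image_of_mem _ he)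
  · exact Or.inr (Set.mem_image_of_mem _ he)

lemma ncard_E (h : γ.IsLocalFace n T) :
    γ.E.ncard = (hEdge ⁻¹' γ.E).ncard + (vEdge ⁻¹' γ.E).ncard := by
  have hA : (hEdge ⁻¹' γ.E).Finite := h.finite_V.subset fun _ hp => h.head_mem hp
  have hB : (vEdge ⁻¹' γ.E).Finite := h.finite_V.subset fun _ hp => h.head_mem hp
  have hdisj : Disjoint (hEdge '' (hEdge ⁻¹' γ.E)) (vEdge '' (vEdge ⁻¹' γ.E)) := by
    rw [Set.disjoint_left]
    rintro _ ⟨p, hp, rfl⟩ ⟨q, -, hq⟩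
    obtain ⟨htail, rfl⟩ := Prod.mk.inj hq
    have := congrArg Prod.fst htail
    have := h.one_le_of_hEdge_mem hp
    dsimp only at *
    omega
  have hinj : Function.Injective hEdge := fun _ _ e => congrArg Prod.snd e
  have vinj : Function.Injective vEdge := fun _ _ e => congrArg Prod.snd e
  conv_lhs => rw [h.E_eq_union]
  rw [Set.ncard_union_eq hdisj (hA.image _) (hB.image _), Set.ncard_image_of_injective _ hinj,
    Set.ncard_image_of_injective _ vinj]

lemma ldim_eq_ncard_doubleHeads (h : γ.IsLocalFace n T) (h0 : (0, 0) ∈ γ.V) :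
    ldim γ = (doubleHeads γ.E).ncard := by
  have hA : (hEdge ⁻¹' γ.E).Finite := h.finite_V.subset fun _ hp => h.head_mem hp
  have hB : (vEdge ⁻¹' γ.E).Finite := h.finite_V.subset fun _ hp => h.head_mem hp
  have hunion : hEdge ⁻¹' γ.E ∪ vEdge ⁻¹' γ.E = γ.V \ {(0, 0)} := by
    ext p
    by_cases hp : p = (0, 0)
    · subst hp
      refine iff_of_false ?_ fun h => h.2 rfl
      rintro (he | he)
      · simpa using h.one_le_of_hEdge_mem he
      · simpa using h.one_le_of_vEdge_mem he
    · exact (h.mem_V_iff_into hp).symm.trans (and_iff_left hp).symm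
  have hcard := Set.ncard_union_add_ncard_inter (hEdge ⁻¹' γ.E) (vEdge ⁻¹' γ.E) hA hB
  have hV := Set.ncard_sdiff_singleton_add_one h0 h.finite_V
  rw [hunion, ← h.ncard_E] at hcard
  change _ + (doubleHeads γ.E).ncard = _ at hcard
  rw [ldim]
  omega

end LGraph.IsLocalFace

variable {n : ℕ} {lam : ℕ → ℝ} {E : Set ((ℕ × ℕ) × (ℕ × ℕ))} {γ : LGraph} {x y : GCIdx n → ℝ}

/-- The equations cutting the face `psiGC n lam γ` out of the polytope, for `E = γ.E`. -/
def TightOff (n : ℕ) (lam : ℕ → ℝ) (E : Set ((ℕ × ℕ) × (ℕ × ℕ))) (x : GCIdx n → ℝ) : Prop :=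
  ∀ i j, (i, j) ∈ GCIdx n →
    (hEdge (i, j) ∉ E → gcEntry n lam x (i, j) = gcEntry n lam x (i, j + 1)) ∧
    (vEdge (i, j) ∉ E → gcEntry n lam x (i, j) = gcEntry n lam x (i + 1, j))

lemma TightOff.add (hx : TightOff n lam E x) (hy : TightOff n 0 E y) :
    TightOff n lam E (x + y) := fun i j hij => by
  simp only [gcEntry_add]
  exact ⟨fun he => by rw [(hx i j hij).1 he, (hy i j hij).1 he],
    fun he => by rw [(hx i j hij).2 he, (hy i j hij).2 he]⟩

lemma TightOff.sub (hx : TightOff n lam E x) (hy : TightOff n lam E y) :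
    TightOff n 0 E (x - y) := fun i j hij => by
  simp only [gcEntry_sub (lam := lam)]
  exact ⟨fun he => by rw [(hx i j hij).1 he, (hy i j hij).1 he],
    fun he => by rw [(hx i j hij).2 he, (hy i j hij).2 he]⟩

lemma TightOff.smul (c : ℝ) (hy : TightOff n 0 E y) : TightOff n 0 E (c • y) := fun i j hij => by
  simp only [gcEntry_smul]
  exact ⟨fun he => by rw [(hy i j hij).1 he], fun he => by rw [(hy i j hij).2 he]⟩

/-- The solutions of the homogeneous equations `TightOff`: the direction of the affine span of a
face of the polytope. -/
def tightSubmodule (n : ℕ) (E : Set ((ℕ × ℕ) × (ℕ × ℕ))) : Submodule ℝ (GCIdx n → ℝ) where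
  carrier := {y | TightOff n 0 E y}
  zero_mem' := fun i j _ => by simp [gcEntry]
  add_mem' := TightOff.add
  smul_mem' c _ := TightOff.smul c

lemma IsGeneric.eventually_add_smul_mem_GCPoly (hx : IsGeneric n lam E x) (hy : TightOff n 0 E y) :
    ∀ᶠ ε in nhds (0 : ℝ), x + ε • y ∈ GCPoly n lam := by
  suffices ∀ᶠ ε in nhds (0 : ℝ), ∀ p ∈ GCIdx n,
      gcEntry n lam (x + ε • y) (p.1, p.2) ≤ gcEntry n lam (x + ε • y) (p.1, p.2 + 1) ∧
      gcEntry n lam (x + ε • y) (p.1 + 1, p.2) ≤ gcEntry n lam (x + ε • y) (p.1, p.2) from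
    this.mono fun ε h i j hij => h (i, j) hij
  refine (Filter.eventually_all_finite (GCIdx.finite n)).2 fun ⟨i, j⟩ hij => ?_
  simp only [gcEntry_add, gcEntry_smul]
  exact ((hx i j hij).1.eventually_add_mul_le (hy i j hij).1).and
    ((hx i j hij).2.eventually_add_mul_le fun he => ((hy i j hij).2 he).symm)

lemma IsGeneric.vectorSpan_psiGC (hx : IsGeneric n lam γ.E x) :
    vectorSpan ℝ (psiGC n lam γ) = tightSubmodule n γ.E := by
  refine vectorSpan_eq_of_sub_mem_of_smul_add_mem hx.mem_psiGC
    (fun y hy => TightOff.sub hy.2 hx.mem_psiGC.2) fun y hy => ?_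
  have hmem : ∀ᶠ ε in nhdsWithin (0 : ℝ) {0}ᶜ, x + ε • y ∈ GCPoly n lam :=
    (hx.eventually_add_smul_mem_GCPoly hy).filter_mono nhdsWithin_le_nhds
  obtain ⟨ε, hε, hε0⟩ := (hmem.and self_mem_nhdsWithin).exists
  exact ⟨ε, hε0, hε, TightOff.add hx.mem_psiGC.2 (hy.smul ε)⟩

lemma TightOff.eq_zero (hy : TightOff n 0 E y) (h0 : ∀ p ∈ doubleHeads E, gcEntry n 0 y p = 0) :
    y = 0 := by
  suffices ∀ i j, (i, j) ∈ GCIdx n → gcEntry n 0 y (i, j) = 0 by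
    funext p
    rw [← gcEntry_of_mem (lam := 0) (x := y) p.2]
    exact this _ _ p.2
  refine fun i j hij => GCIdx.induction (fun i j hij ih_up ih_right => ?_) hij
  by_cases hh : hEdge (i, j) ∈ E
  · by_cases hv : vEdge (i, j) ∈ E
    · exact h0 _ ⟨hh, hv⟩
    · rw [(hy i j hij).2 hv]
      exact gcEntry_zero_eq_zero_of_imp ih_right
  · rw [(hy i j hij).1 hh]
    exact gcEntry_zero_eq_zero_of_imp ih_up

lemma LGraph.IsLocalFace.exists_tightOff {T : Set (ℕ × ℕ)} (h : γ.IsLocalFace n T)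
    (z : ℕ × ℕ → ℝ) :
    ∃ y, TightOff n 0 γ.E y ∧ ∀ p ∈ doubleHeads γ.E, gcEntry n 0 y p = z p := by
  obtain ⟨y, hy⟩ := exists_gcEntry_eq n 0 fun p up right =>
    if hEdge p ∈ γ.E then if vEdge p ∈ γ.E then z p else right else up
  refine ⟨y, fun i j hij => ?_, fun p hp => ?_⟩
  · refine GCIdx.induction (fun i j hij ih_up ih_right => ?_) hij
    have hdiag (hV : (i, j) ∉ γ.V) :
        gcEntry n 0 y (i, j + 1) = gcEntry n 0 y (i + 1, j) := by
      rcases hij.2.2.lt_or_eq with hlt | heq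
      · obtain ⟨hh, hv⟩ := not_or.1 (mt (h.mem_V_iff_outOf hlt).2 hV)
        rw [(ih_up ⟨hij.1, by simp, by dsimp only at *; omega⟩).2 hv,
          (ih_right ⟨by simp, hij.2.1, by dsimp only at *; omega⟩).1 hh]
      · rw [gcEntry_of_lt (by dsimp only at *; omega), gcEntry_of_lt (by dsimp only at *; omega)]
        rfl
    rw [hy i j hij]
    by_cases hh : hEdge (i, j) ∈ γ.E <;> by_cases hv : vEdge (i, j) ∈ γ.E
    · exact ⟨fun he => absurd hh he, fun he => absurd hv he⟩
    · exact ⟨fun he => absurd hh he, fun _ => by rw [if_pos hh, if_neg hv]⟩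
    · exact ⟨fun _ => by rw [if_neg hh], fun he => absurd hv he⟩
    · have hne : (i, j) ≠ (0, 0) := by
        rintro ⟨⟩
        simpa using hij.1
      have hV : (i, j) ∉ γ.V := mt (h.mem_V_iff_into hne).1 (not_or.2 ⟨hh, hv⟩)
      rw [if_neg hh]
      exact ⟨fun _ => rfl, fun _ => hdiag hV⟩
  · rw [hy _ _ (h.doubleHeads_subset hp), if_pos hp.1, if_pos hp.2]

lemma LGraph.IsLocalFace.finrank_tightSubmodule {T : Set (ℕ × ℕ)} (h : γ.IsLocalFace n T) :
    Module.finrank ℝ (tightSubmodule n γ.E) = (doubleHeads γ.E).ncard := by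
  let restrict : tightSubmodule n γ.E →ₗ[ℝ] (doubleHeads γ.E → ℝ) :=
    (LinearMap.funLeft ℝ ℝ (Set.inclusion h.doubleHeads_subset)).domRestrict _
  have hval (y) (p : doubleHeads γ.E) : restrict y p = gcEntry n 0 y.1 p :=
    (gcEntry_of_mem (h.doubleHeads_subset p.2)).symm
  have hinj : Function.Injective restrict := by
    refine (injective_iff_map_eq_zero _).2 fun y hy => Subtype.ext (TightOff.eq_zero y.2 ?_)
    exact fun p hp => by rw [← hval y ⟨p, hp⟩, hy, Pi.zero_apply]
  have hsurj : Function.Surjective restrict := fun z => by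
    obtain ⟨y, hy, hyz⟩ := h.exists_tightOff (Function.extend Subtype.val z 0)
    refine ⟨⟨y, hy⟩, funext fun p => ?_⟩
    rw [hval, hyz p p.2, Subtype.val_injective.extend_apply]
  have : Finite (doubleHeads γ.E) := (GCIdx.finite n).subset h.doubleHeads_subset
  have := Fintype.ofFinite (doubleHeads γ.E)
  rw [(LinearEquiv.ofBijective restrict ⟨hinj, hsurj⟩).finrank_eq,
    Module.finrank_fintype_fun_eq_card, ← Nat.card_eq_fintype_card, Nat.card_coe_set_eq]

lemma LGraph.IsLocalFace.GCdim_psiGC (h : γ.IsLocalFace n (descents n lam))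
    (hlam : AntitoneOn lam (Set.Icc 1 n)) : (GCdim n (psiGC n lam γ) : ℤ) = ldim γ := by
  obtain ⟨x, hx⟩ := h.exists_isGeneric hlam
  rw [h.ldim_eq_ncard_doubleHeads (h.zero_mk_mem (zero_mk_mem_descents n lam) n.zero_le), GCdim,
    direction_affineSpan, hx.vectorSpan_psiGC, h.finrank_tightSubmodule]

end Dimension

section FaceLattice

variable {s n : ℕ} {k : ℕ → ℕ} {lam : ℕ → ℝ} {F F' : Set (GCIdx n → ℝ)}

lemma IsGCFace.phiGC_isLocalFace (hn : 0 < n) (hF : IsGCFace n lam F) :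
    (phiGC n lam F).IsLocalFace n (descents n lam) :=
  isLocalFace_phiGC hn hF.subset_GCPoly hF.1

lemma IsGCFace.GCdim_eq_ldim (hn : 0 < n) (hlam : AntitoneOn lam (Set.Icc 1 n))
    (hF : IsGCFace n lam F) : (GCdim n F : ℤ) = ldim (phiGC n lam F) := by
  rw [← (hF.phiGC_isLocalFace hn).GCdim_psiGC hlam, hF.psiGC_phiGC]

lemma IsGCFace.phiGC_le_phiGC_iff (hF : IsGCFace n lam F) (hF' : IsGCFace n lam F') :
    phiGC n lam F ≤ phiGC n lam F' ↔ F ⊆ F' := by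
  refine ⟨fun h => ?_, phiGC_mono⟩
  simpa only [hF.psiGC_phiGC, hF'.psiGC_phiGC] using psiGC_mono (n := n) (lam := lam) h

/-- The isomorphism `φ` of face posets, with inverse `ψ`. -/
def gcFaceOrderIso (hn : 0 < nseq k s) (h : HasBlockStructure s k lam) :
    {F : Set (GCIdx (nseq k s) → ℝ) // IsGCFace (nseq k s) lam F} ≃o
      {γ : LGraph // IsLadderFace s k γ} where
  toFun F := ⟨phiGC _ lam F.1,
    (isLadderFace_iff_isLocalFace_descents h).2 (F.2.phiGC_isLocalFace hn)⟩
  invFun γ := ⟨psiGC _ lam γ.1,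
    ((isLadderFace_iff_isLocalFace_descents h).1 γ.2).isGCFace_psiGC h.antitoneOn⟩
  left_inv F := Subtype.ext F.2.psiGC_phiGC
  right_inv γ := Subtype.ext
    (((isLadderFace_iff_isLocalFace_descents h).1 γ.2).phiGC_psiGC hn h.antitoneOn)
  map_rel_iff' {F F'} := F.2.phiGC_le_phiGC_iff F'.2

end FaceLattice

/-- Theorem 1.9. For a sequence `k` of positive integers with
`n = k_1 + ⋯ + k_s` and `λ` with block structure `k`, there is an order
isomorphism from the face poset of the Gelfand–Cetlin polytope `P_λ` to the
face poset of the ladder diagram `Γ_k` preserving dimensions. -/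
theorem faceLattice_iso (s : ℕ) (hs : 1 ≤ s) (k : ℕ → ℕ) (hk : ∀ i < s, 0 < k i)
    (lam : ℕ → ℝ) (hlam : HasBlockStructure s k lam) :
    ∃ φ : {F : Set (GCIdx (nseq k s) → ℝ) // IsGCFace (nseq k s) lam F} →
          {γ : LGraph // IsLadderFace s k γ},
      Function.Bijective φ ∧
      (∀ F F', F.1 ⊆ F'.1 ↔ (φ F).1 ≤ (φ F').1) ∧
      (∀ F, (GCdim (nseq k s) F.1 : ℤ) = ldim (φ F).1) := by
  have hn : 0 < nseq k s :=
    Finset.sum_pos (fun i hi => hk i (Finset.mem_range.1 hi))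
      (Finset.nonempty_range_iff.2 (Nat.one_le_iff_ne_zero.1 hs))
  let φ := gcFaceOrderIso hn hlam
  exact ⟨φ, φ.bijective, fun F F' => φ.le_iff_le.symm,
    fun F => F.2.GCdim_eq_ldim hn hlam.antitoneOn⟩
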